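/- Let α ∈ (0,1), c ∈ ℝ, and let u : [0,∞) → ℝ be continuously differentiable with u(0) = 0. Define y(t) = c + (1−α)·u(t) + α·∫_0^t u(τ) dτ. Then y is continuously differentiable and (1/(1−α)) ∫_0^t y′(τ) · exp((α/(α−1))·(t−τ)) dτ = u(t) for all t ≥ 0. -/

import Mathlib

open MeasureTheory intervalIntegral Real Set Filter

/-! With `k = α / (α - 1)` one has `α = -(1 - α) k`, so the derivative of `(1 - α) u + α ∫ u` is
`(1 - α) (u' - k u)`. The exponential kernel is the integrating factor of `u' - k u`:
`exp (k (t - τ)) (u' τ - k u τ)` is the derivative in `τ` of `exp (k (t - τ)) u τ`. -/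

section CaputoFabrizio

variable {E : Type*} [NormedAddCommGroup E] [NormedSpace ℝ E]

/-- The Caputo–Fabrizio fractional derivative of order `α` based at `a`, normalized by `M(α) = 1`.
The derivative of `y` is taken within `[a, ∞)`, hence one-sided at `a`; at `α = 1` the value is
junk. -/
noncomputable def caputoFabrizioDeriv (α a : ℝ) (y : ℝ → E) (t : ℝ) : E :=
  (1 / (1 - α)) • ∫ τ in a..t, exp (α / (α - 1) * (t - τ)) • derivWithin y (Ici a) τ

/-- The Caputo–Fabrizio fractional integral of order `α` based at `a`, a right inverse of
`caputoFabrizioDeriv` on functions vanishing at `a`. -/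
noncomputable def caputoFabrizioIntegral (α a : ℝ) (u : ℝ → E) (t : ℝ) : E :=
  (1 - α) • u t + α • ∫ τ in a..t, u τ

theorem caputoFabrizioDeriv_congr {α a t : ℝ} {y z : ℝ → E} (hyz : EqOn y z (Ici a))
    (ht : a ≤ t) : caputoFabrizioDeriv α a y t = caputoFabrizioDeriv α a z t := by
  unfold caputoFabrizioDeriv
  congr 1
  refine integral_congr fun τ hτ ↦ ?_
  rw [uIcc_of_le ht] at hτ
  simp only [derivWithin_congr hyz (hyz hτ.1)]

theorem caputoFabrizioDeriv_const_add (α a t : ℝ) (c : E) (y : ℝ → E) :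
    caputoFabrizioDeriv α a (fun s ↦ c + y s) t = caputoFabrizioDeriv α a y t := by
  simp only [caputoFabrizioDeriv, derivWithin_const_add]

variable [CompleteSpace E]

theorem integral_exp_smul_deriv_sub_smul {a b : ℝ} {u u' : ℝ → E} (k : ℝ) (hab : a ≤ b)
    (hu : ContinuousOn u (Icc a b)) (hderiv : ∀ τ ∈ Ioo a b, HasDerivAt u (u' τ) τ)
    (hu' : IntervalIntegrable u' volume a b) :
    ∫ τ in a..b, exp (k * (b - τ)) • (u' τ - k • u τ) = u b - exp (k * (b - a)) • u a := by
  have hkernel : Continuous fun τ ↦ exp (k * (b - τ)) := by fun_prop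
  have hprod : ∀ τ ∈ Ioo a b, HasDerivAt (fun s ↦ exp (k * (b - s)) • u s)
      (exp (k * (b - τ)) • (u' τ - k • u τ)) τ := by
    intro τ hτ
    have hexp : HasDerivAt (fun s ↦ exp (k * (b - s))) (exp (k * (b - τ)) * (k * -1)) τ :=
      (((hasDerivAt_id τ).const_sub b).const_mul k).exp
    exact (hexp.smul (hderiv τ hτ)).congr_deriv (by module)
  have hprodInt : IntervalIntegrable (fun τ ↦ exp (k * (b - τ)) • (u' τ - k • u τ)) volume a b :=
    (hu'.sub ((hu.const_smul k).intervalIntegrable_of_Icc hab)).continuousOn_smul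
      hkernel.continuousOn
  simpa using integral_eq_sub_of_hasDerivAt_of_le hab (hkernel.continuousOn.smul hu) hprod hprodInt

theorem hasDerivWithinAt_integral_Ici {a t : ℝ} {u : ℝ → E} (hu : ContinuousOn u (Ici a))
    (ht : a ≤ t) : HasDerivWithinAt (fun s ↦ ∫ τ in a..s, u τ) (u t) (Ici a) t := by
  have hmem : t ∈ Icc a (t + 1) := ⟨ht, by linarith⟩
  have hIcc : ContinuousOn u (Icc a (t + 1)) := hu.mono Icc_subset_Ici_self
  have : Fact (t ∈ Icc a (t + 1)) := ⟨hmem⟩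
  have hderiv : HasDerivWithinAt (fun s ↦ ∫ τ in a..s, u τ) (u t) (Icc a (t + 1)) t :=
    integral_hasDerivWithinAt_right
      ((hu.mono Icc_subset_Ici_self).intervalIntegrable_of_Icc ht)
      (hIcc.stronglyMeasurableAtFilter_nhdsWithin measurableSet_Icc t) (hIcc t hmem)
  exact hderiv.mono_of_mem_nhdsWithin
    (inter_mem_nhdsWithin (Ici a) (Iic_mem_nhds (lt_add_one t)))

variable {α a : ℝ} {u : ℝ → E}

theorem hasDerivWithinAt_caputoFabrizioIntegral {t : ℝ} {u' : E} (hu : ContinuousOn u (Ici a))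
    (ht : a ≤ t) (hderiv : HasDerivWithinAt u u' (Ici a) t) :
    HasDerivWithinAt (caputoFabrizioIntegral α a u) ((1 - α) • u' + α • u t) (Ici a) t :=
  (hderiv.const_smul (1 - α)).add ((hasDerivWithinAt_integral_Ici hu ht).const_smul α)

theorem derivWithin_caputoFabrizioIntegral (hu : ContDiffOn ℝ 1 u (Ici a)) :
    EqOn (derivWithin (caputoFabrizioIntegral α a u) (Ici a))
      (fun t ↦ (1 - α) • derivWithin u (Ici a) t + α • u t) (Ici a) := fun t ht ↦
  (hasDerivWithinAt_caputoFabrizioIntegral hu.continuousOn ht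
    (hu.differentiableOn one_ne_zero t ht).hasDerivWithinAt).derivWithin (uniqueDiffOn_Ici a t ht)

theorem contDiffOn_caputoFabrizioIntegral (hu : ContDiffOn ℝ 1 u (Ici a)) :
    ContDiffOn ℝ 1 (caputoFabrizioIntegral α a u) (Ici a) := by
  have hu' : ContinuousOn (derivWithin u (Ici a)) (Ici a) :=
    hu.continuousOn_derivWithin (uniqueDiffOn_Ici a) le_rfl
  refine (contDiffOn_one_iff_derivWithin (uniqueDiffOn_Ici a)).2 ⟨fun t ht ↦ ?_, ?_⟩
  · exact (hasDerivWithinAt_caputoFabrizioIntegral hu.continuousOn ht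
      (hu.differentiableOn one_ne_zero t ht).hasDerivWithinAt).differentiableWithinAt
  · exact ((hu'.const_smul (1 - α)).add (hu.continuousOn.const_smul α)).congr
      (derivWithin_caputoFabrizioIntegral hu)

theorem derivWithin_caputoFabrizioIntegral_eq_smul_sub {t : ℝ} (hα : α ≠ 1)
    (hu : ContDiffOn ℝ 1 u (Ici a)) (ht : a ≤ t) :
    derivWithin (caputoFabrizioIntegral α a u) (Ici a) t =
      (1 - α) • (derivWithin u (Ici a) t - (α / (α - 1)) • u t) := by
  have hαk : (1 - α) * (α / (α - 1)) = -α := by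
    have : α - 1 ≠ 0 := sub_ne_zero.2 hα
    field_simp
    ring
  rw [derivWithin_caputoFabrizioIntegral hu ht, smul_sub, smul_smul, hαk, neg_smul, sub_neg_eq_add]

theorem caputoFabrizioDeriv_caputoFabrizioIntegral {t : ℝ} (hα : α ≠ 1)
    (hu : ContDiffOn ℝ 1 u (Ici a)) (ht : a ≤ t) :
    caputoFabrizioDeriv α a (caputoFabrizioIntegral α a u) t =
      u t - exp (α / (α - 1) * (t - a)) • u a := by
  have hα₀ : 1 - α ≠ 0 := sub_ne_zero.2 hα.symm
  have hderiv : ∀ τ ∈ Ioo a t, HasDerivAt u (derivWithin u (Ici a) τ) τ := fun τ hτ ↦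
    (hu.differentiableOn one_ne_zero τ hτ.1.le).hasDerivWithinAt.hasDerivAt (Ici_mem_nhds hτ.1)
  have hderivInt : IntervalIntegrable (derivWithin u (Ici a)) volume a t :=
    ((hu.continuousOn_derivWithin (uniqueDiffOn_Ici a) le_rfl).mono
      Icc_subset_Ici_self).intervalIntegrable_of_Icc ht
  calc caputoFabrizioDeriv α a (caputoFabrizioIntegral α a u) t
      = (1 / (1 - α)) • ∫ τ in a..t, (1 - α) • exp (α / (α - 1) * (t - τ)) •
          (derivWithin u (Ici a) τ - (α / (α - 1)) • u τ) := by
        rw [caputoFabrizioDeriv]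
        congr 1
        refine integral_congr fun τ hτ ↦ ?_
        rw [uIcc_of_le ht] at hτ
        simp only [derivWithin_caputoFabrizioIntegral_eq_smul_sub hα hu hτ.1, smul_comm (1 - α)]
    _ = ∫ τ in a..t, exp (α / (α - 1) * (t - τ)) •
          (derivWithin u (Ici a) τ - (α / (α - 1)) • u τ) := by
        rw [intervalIntegral.integral_smul, smul_smul, one_div_mul_cancel hα₀, one_smul]
    _ = u t - exp (α / (α - 1) * (t - a)) • u a :=
        integral_exp_smul_deriv_sub_smul _ ht (hu.continuousOn.mono Icc_subset_Ici_self)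
          hderiv hderivInt

theorem cf_integral_is_solution_general {y : ℝ → E} {c : E} (hα : α ≠ 1)
    (hu : ContDiffOn ℝ 1 u (Ici a))
    (hy : ∀ t, a ≤ t → y t = c + caputoFabrizioIntegral α a u t) :
    ContDiffOn ℝ 1 y (Ici a) ∧ ∀ t, a ≤ t →
      caputoFabrizioDeriv α a y t = u t - exp (α / (α - 1) * (t - a)) • u a := by
  refine ⟨(contDiffOn_const.add (contDiffOn_caputoFabrizioIntegral hu)).congr hy, fun t ht ↦ ?_⟩
  rw [caputoFabrizioDeriv_congr hy ht, caputoFabrizioDeriv_const_add,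
    caputoFabrizioDeriv_caputoFabrizioIntegral hα hu ht]

end CaputoFabrizio

/-- If `u` is `C¹` on `[0,∞)` with `u(0) = 0` and
`y(t) = c + (1-α) u(t) + α ∫_0^t u(τ) dτ`, then `y` is `C¹` on `[0,∞)` and the
Caputo–Fabrizio fractional derivative of `y` equals `u(t)` for all `t ≥ 0`. -/
theorem cf_integral_is_solution (α : ℝ) (hα : α ∈ Set.Ioo (0 : ℝ) 1) (c : ℝ) (u : ℝ → ℝ)
    (hu : ContDiffOn ℝ 1 u (Set.Ici 0)) (hu0 : u 0 = 0)
    (y : ℝ → ℝ)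
    (hy : ∀ t : ℝ, y t = c + (1 - α) * u t + α * ∫ τ in (0 : ℝ)..t, u τ) :
    ContDiffOn ℝ 1 y (Set.Ici 0) ∧
      ∀ t : ℝ, 0 ≤ t →
        (1 / (1 - α)) *
          (∫ τ in (0 : ℝ)..t, derivWithin y (Set.Ici 0) τ * Real.exp ((α / (α - 1)) * (t - τ)))
        = u t := by
  simpa [caputoFabrizioDeriv, hu0, mul_comm] using
    cf_integral_is_solution_general (a := 0) hα.2.ne hu fun t _ ↦ (hy t).trans (add_assoc _ _ _)
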